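/- Let f ∈ ℂ[x] be a square-free univariate polynomial. Then the annihilator of f^s in D_1[s], namely { P ∈ D_1[s] : P·f^s = 0 in L(f,0) }, is the left ideal generated by the single operator f·∂_x − s·f'. -/

import Mathlib

open Polynomial

noncomputable section

/-- Coefficient-wise application of a derivation `d` on `R` to a polynomial in `s`. -/
def dPoly {R : Type} [CommRing R] [Algebra ℂ R] (d : Derivation ℂ R R)
    (p : Polynomial R) : Polynomial R :=
  p.sum fun i a => Polynomial.C (d a) * Polynomial.X ^ i

/-- An element `a(x,s) ∈ ℂ[x][s]` (inner variable `x`, outer variable `s`), viewed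
as the multiplication operator it induces on `L(f,0) = ℂ[x,f⁻¹,s]·f^s = R[s]`. -/
def mulCoeff {R : Type} [CommRing R] [Algebra (Polynomial ℂ) R]
    (a : Polynomial (Polynomial ℂ)) : Polynomial R :=
  a.sum fun l b => Polynomial.C (algebraMap (Polynomial ℂ) R b) * Polynomial.X ^ l

/-- The action of `∂ₓ` on `L(f,0) = ℂ[x,f⁻¹,s]·f^s`:
`∂ₓ(a f^s) = (a' + s·a·f'/f)·f^s`. -/
def DopX (f : Polynomial ℂ) {R : Type} [CommRing R] [Algebra ℂ R]
    [Algebra (Polynomial ℂ) R] (d : Derivation ℂ R R) (finv : R)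
    (p : Polynomial R) : Polynomial R :=
  dPoly d p
    + Polynomial.X * Polynomial.C (finv * algebraMap (Polynomial ℂ) R (derivative f)) * p

/-- An element of `D_1[s]` in its normal form `∑_k a_k(x,s) ∂ₓ^k`
(`a_k ∈ ℂ[x][s]`) is recorded as a polynomial in `∂ₓ` (the outermost variable)
with coefficients in `ℂ[x][s]`; this is its action on `L(f,0)`. -/
def actD1s (f : Polynomial ℂ) {R : Type} [CommRing R] [Algebra ℂ R]
    [Algebra (Polynomial ℂ) R] (d : Derivation ℂ R R) (finv : R)
    (P : Polynomial (Polynomial (Polynomial ℂ))) (p : Polynomial R) : Polynomial R :=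
  P.sum fun k a => mulCoeff a * (DopX f d finv)^[k] p

/-- Differentiation with respect to `x` on `ℂ[x][s]`. -/
def dX (q : Polynomial (Polynomial ℂ)) : Polynomial (Polynomial ℂ) :=
  q.sum fun l b => Polynomial.C (derivative b) * Polynomial.X ^ l

/-- The faithful action of `D_1[s]` (in normal form) on `ℂ[x][s]`, where `x` acts by
multiplication, `s` by multiplication and `∂ₓ` by differentiation in `x`; two
elements of `D_1[s]` are equal iff they act identically, and the product of two
operators corresponds to the composition of their actions. -/
def rep (P : Polynomial (Polynomial (Polynomial ℂ))) (q : Polynomial (Polynomial ℂ)) :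
    Polynomial (Polynomial ℂ) :=
  P.sum fun k a => a * dX^[k] q

lemma dPoly_coeff {R : Type} [CommRing R] [Algebra ℂ R] (d : Derivation ℂ R R)
    (p : Polynomial R) (n : ℕ) : (dPoly d p).coeff n = d (p.coeff n) := by
  unfold dPoly
  rw [Polynomial.sum_def, Polynomial.finsetSum_coeff]
  simp only [Polynomial.coeff_C_mul_X_pow]
  rw [Finset.sum_ite_eq]
  split_ifs with h
  · rfl
  · rw [Polynomial.notMem_support_iff.mp h, map_zero]

lemma dPoly_add {R : Type} [CommRing R] [Algebra ℂ R] (d : Derivation ℂ R R)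
    (p q : Polynomial R) : dPoly d (p + q) = dPoly d p + dPoly d q := by
  ext n; simp [dPoly_coeff]

lemma dPoly_mul {R : Type} [CommRing R] [Algebra ℂ R] (d : Derivation ℂ R R)
    (p q : Polynomial R) : dPoly d (p * q) = dPoly d p * q + p * dPoly d q := by
  ext n
  simp only [dPoly_coeff, Polynomial.coeff_mul, Polynomial.coeff_add, map_sum,
    ← Finset.sum_add_distrib, Derivation.leibniz, smul_eq_mul]
  refine Finset.sum_congr rfl fun x _ => ?_
  ring

lemma dX_eq (q : Polynomial (Polynomial ℂ)) : dX q = dPoly Polynomial.derivative' q := rfl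

lemma dX_coeff (q : Polynomial (Polynomial ℂ)) (n : ℕ) :
    (dX q).coeff n = derivative (q.coeff n) := by
  rw [dX_eq, dPoly_coeff]; rfl

lemma dX_mul (p q : Polynomial (Polynomial ℂ)) : dX (p * q) = dX p * q + p * dX q := by
  simp only [dX_eq, dPoly_mul]

lemma dX_C (b : Polynomial ℂ) : dX (C b) = C (derivative b) := by
  ext1 n
  rw [dX_coeff, coeff_C, coeff_C]
  split_ifs <;> simp

lemma dX_iter_C (k : ℕ) (b : Polynomial ℂ) : dX^[k] (C b) = C (derivative^[k] b) := by
  induction k generalizing b with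
  | zero => rfl
  | succ k ih => rw [Function.iterate_succ_apply, dX_C, ih, Function.iterate_succ_apply]

lemma dX_add (p q : Polynomial (Polynomial ℂ)) : dX (p + q) = dX p + dX q := by
  simp only [dX_eq, dPoly_add]

lemma dX_zero : dX 0 = 0 := by
  ext1 n
  rw [dX_coeff, coeff_zero, derivative_zero]

/-- Coefficientwise `dX` on normal forms. -/
def dXX (P : Polynomial (Polynomial (Polynomial ℂ))) : Polynomial (Polynomial (Polynomial ℂ)) :=
  P.sum fun k a => monomial k (dX a)

lemma dXX_coeff (P : Polynomial (Polynomial (Polynomial ℂ))) (n : ℕ) :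
    (dXX P).coeff n = dX (P.coeff n) := by
  unfold dXX
  rw [Polynomial.sum_def, Polynomial.finsetSum_coeff]
  simp only [Polynomial.coeff_monomial]
  rw [Finset.sum_ite_eq']
  split_ifs with h
  · rfl
  · rw [Polynomial.notMem_support_iff.mp h, dX_zero]

/-- Left multiplication by `∂ₓ` on normal forms. -/
def leftD (P : Polynomial (Polynomial (Polynomial ℂ))) :
    Polynomial (Polynomial (Polynomial ℂ)) := P * X + dXX P

lemma leftD_coeff (P : Polynomial (Polynomial (Polynomial ℂ))) (n : ℕ) :
    (leftD P).coeff (n + 1) = P.coeff n + dX (P.coeff (n + 1)) := by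
  simp [leftD, dXX_coeff]

lemma dXX_add (P Q) : dXX (P + Q) = dXX P + dXX Q := by
  ext1 n
  simp only [dXX_coeff, coeff_add]
  exact dX_add _ _

lemma leftD_add (P Q) : leftD (P + Q) = leftD P + leftD Q := by
  simp only [leftD, dXX_add]; ring

lemma leftD_monomial (k a) : leftD (monomial k a) = monomial (k+1) a + monomial k (dX a) := by
  unfold leftD
  rw [monomial_mul_X]
  congr 1
  ext1 n
  rw [dXX_coeff, coeff_monomial, coeff_monomial]
  split_ifs
  · rfl
  · exact dX_zero

/-- The general evaluation of a normal form. -/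
def ev {S : Type} [CommRing S] (φ : Polynomial (Polynomial ℂ) →+* S) (T : S → S) (m : S)
    (P : Polynomial (Polynomial (Polynomial ℂ))) : S :=
  P.sum fun k a => φ a * T^[k] m

section
variable {S : Type} [CommRing S] (φ : Polynomial (Polynomial ℂ) →+* S) (T : S → S) (m : S)

lemma ev_add (P Q) : ev φ T m (P + Q) = ev φ T m P + ev φ T m Q := by
  unfold ev
  exact Polynomial.sum_add_index _ _ _ (by simp) (by intros; simp [add_mul])

lemma ev_zero : ev φ T m 0 = 0 := by simp [ev]

lemma ev_monomial (k a) : ev φ T m (monomial k a) = φ a * T^[k] m := by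
  unfold ev
  exact Polynomial.sum_monomial_index _ _ (by simp)

lemma ev_C_mul (a P) : ev φ T m (C a * P) = φ a * ev φ T m P := by
  induction P using Polynomial.induction_on' with
  | add p q hp hq => rw [mul_add, ev_add, ev_add, hp, hq, mul_add]
  | monomial k b => rw [C_mul_monomial, ev_monomial, ev_monomial, map_mul, mul_assoc]

lemma ev_sub (P Q) : ev φ T m (P - Q) = ev φ T m P - ev φ T m Q := by
  have h : P - Q + Q = P := by ring
  rw [eq_sub_iff_add_eq, ← ev_add, h]

lemma ev_leftD (hadd : ∀ x y, T (x + y) = T x + T y)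
    (hT : ∀ a x, T (φ a * x) = φ (dX a) * x + φ a * T x) (P) :
    ev φ T m (leftD P) = T (ev φ T m P) := by
  induction P using Polynomial.induction_on' with
  | add p q hp hq => rw [leftD_add, ev_add, ev_add, hp, hq, hadd]
  | monomial k b =>
    rw [leftD_monomial, ev_add, ev_monomial, ev_monomial, ev_monomial, hT,
      Function.iterate_succ_apply', add_comm]

lemma ev_leftD_iter (hadd : ∀ x y, T (x + y) = T x + T y)
    (hT : ∀ a x, T (φ a * x) = φ (dX a) * x + φ a * T x) (k P) :
    ev φ T m (leftD^[k] P) = T^[k] (ev φ T m P) := by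
  induction k with
  | zero => rfl
  | succ k ih => rw [Function.iterate_succ_apply', ev_leftD φ T m hadd hT, ih,
      Function.iterate_succ_apply']

/-- The product of two normal forms. -/
def nmul (Q G : Polynomial (Polynomial (Polynomial ℂ))) :
    Polynomial (Polynomial (Polynomial ℂ)) :=
  Q.sum fun k a => C a * leftD^[k] G

lemma nmul_add (P Q G) : nmul (P + Q) G = nmul P G + nmul Q G := by
  unfold nmul
  exact Polynomial.sum_add_index _ _ _ (by simp) (by intros; simp [add_mul])

lemma nmul_monomial (k a G) : nmul (monomial k a) G = C a * leftD^[k] G := by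
  unfold nmul
  exact Polynomial.sum_monomial_index _ _ (by simp)

lemma ev_nmul (hadd : ∀ x y, T (x + y) = T x + T y)
    (hT : ∀ a x, T (φ a * x) = φ (dX a) * x + φ a * T x) (Q G) :
    ev φ T m (nmul Q G) = ev φ T (ev φ T m G) Q := by
  induction Q using Polynomial.induction_on' with
  | add p q hp hq => rw [nmul_add, ev_add, ev_add, hp, hq]
  | monomial k b =>
    rw [nmul_monomial, ev_C_mul, ev_leftD_iter φ T m hadd hT, ev_monomial]
end

lemma rep_eq (P q) : rep P q = ev (RingHom.id _) dX q P := rfl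

lemma rep_nmul (Q G q) : rep (nmul Q G) q = rep Q (rep G q) := by
  simp only [rep_eq]
  exact ev_nmul (RingHom.id _) dX q dX_add (fun a x => dX_mul a x) Q G

lemma rep_faithful (P) (h : ∀ q, rep P q = 0) : P = 0 := by
  have key : ∀ k, P.coeff k = 0 := by
    intro k
    induction k using Nat.strong_induction_on with
    | _ k ih =>
      have h1 := h (C (X ^ k))
      unfold rep at h1
      rw [Polynomial.sum_def, Finset.sum_eq_single k] at h1
      · rw [dX_iter_C, Polynomial.iterate_derivative_X_pow_eq_natCast_mul] at h1
        simpa [Nat.descFactorial_self, Nat.factorial_ne_zero] using h1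
      · intro b _ hb
        rcases lt_or_gt_of_ne hb with hb | hb
        · rw [ih b hb, zero_mul]
        · rw [dX_iter_C, Polynomial.iterate_derivative_X_pow_eq_natCast_mul,
            Nat.descFactorial_of_lt hb]
          simp
      · intro hk
        rw [Polynomial.notMem_support_iff.mp hk, zero_mul]
  ext1 k
  rw [key k, coeff_zero]

lemma mulCoeff_eq {R : Type} [CommRing R] [Algebra (Polynomial ℂ) R]
    (a : Polynomial (Polynomial ℂ)) :
    mulCoeff (R := R) a = Polynomial.mapRingHom (algebraMap (Polynomial ℂ) R) a := by
  simp only [coe_mapRingHom, Polynomial.map, Polynomial.eval₂_eq_sum]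
  rfl

lemma actD1s_eq (f : Polynomial ℂ) {R : Type} [CommRing R] [Algebra ℂ R]
    [Algebra (Polynomial ℂ) R] (d : Derivation ℂ R R) (finv : R) (P p) :
    actD1s f d finv P p = ev (Polynomial.mapRingHom (algebraMap (Polynomial ℂ) R))
      (DopX f d finv) p P := by
  unfold actD1s ev
  simp only [mulCoeff_eq]

/-- The numerators `p_k = f^k * ∂ₓ^k f^s / f^s`. -/
def numer (f : Polynomial ℂ) : ℕ → Polynomial (Polynomial ℂ)
  | 0 => 1
  | k + 1 => C f * dX (numer f k) + (X - (k : Polynomial (Polynomial ℂ))) * C (derivative f) * numer f k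

lemma dvd_of_dvd_mul_numer (f : Polynomial ℂ) (hf : IsCoprime f (derivative f)) (k : ℕ) :
    ∀ a, C f ∣ a * numer f k → C f ∣ a := by
  induction k with
  | zero => intro a; simp [numer]
  | succ k ih =>
    intro a h
    have h1 : C f ∣ (a * (X - (k : Polynomial (Polynomial ℂ))) * C (derivative f)) * numer f k := by
      have := dvd_sub h (Dvd.intro (a * dX (numer f k)) (rfl : C f * _ = _))
      refine this.trans (dvd_of_eq ?_)
      rw [numer]; ring
    have h2 := ih _ h1
    have hc : IsCoprime (C f) (C (derivative f)) := hf.map (C : _ →+* _)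
    have h3 := hc.dvd_of_dvd_mul_right h2
    have hz : ∀ q : Polynomial (Polynomial ℂ),
        C f ∣ q ↔ q.map (Ideal.Quotient.mk (Ideal.span {f})) = 0 := by
      intro q
      rw [C_dvd_iff_dvd_coeff, Polynomial.ext_iff]
      simp [Ideal.Quotient.eq_zero_iff_mem, Ideal.mem_span_singleton]
    rw [hz, Polynomial.map_mul] at h3
    rw [hz]
    have hm : (X - (k : Polynomial (Polynomial ℂ))).Monic := by
      have := monic_X_sub_C (k : Polynomial ℂ)
      simpa using this
    exact (hm.map (Ideal.Quotient.mk (Ideal.span {f}))).mul_left_eq_zero_iff.mp h3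

/-- Let `f ∈ ℂ[x]` be square-free.  The annihilator of `f^s` in
`D_1[s]`, i.e. `{ P ∈ D_1[s] : P·f^s = 0 in L(f,0) }`, is the left ideal generated by
the single operator `f·∂ₓ − s·f'`: an operator `P` annihilates `f^s` iff `P = Q·(f∂ₓ − s f')`
for some `Q ∈ D_1[s]` (equality of operators being read off in the faithful
representation `rep` of `D_1[s]` on `ℂ[x,s]`). -/
theorem stmt11 (f : Polynomial ℂ) (hsf : Squarefree f)
    (R : Type) [CommRing R] [Algebra ℂ R] [Algebra (Polynomial ℂ) R]
    [IsScalarTower ℂ (Polynomial ℂ) R]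
    [IsLocalization.Away f R]
    (d : Derivation ℂ R R)
    (hd : ∀ p, d (algebraMap (Polynomial ℂ) R p) = algebraMap (Polynomial ℂ) R (derivative p))
    (finv : R) (hfinv : algebraMap (Polynomial ℂ) R f * finv = 1)
    (G : Polynomial (Polynomial (Polynomial ℂ)))
    (hG : G = Polynomial.C (Polynomial.C f) * Polynomial.X
      - Polynomial.C (Polynomial.X * Polynomial.C (derivative f))) :
    ∀ P : Polynomial (Polynomial (Polynomial ℂ)),
      actD1s f d finv P (1 : Polynomial R) = 0 ↔
      ∃ Q : Polynomial (Polynomial (Polynomial ℂ)),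
        ∀ q : Polynomial (Polynomial ℂ), rep P q = rep Q (rep G q) := by
  have hadd : ∀ x y, DopX f d finv (x + y) = DopX f d finv x + DopX f d finv y := by
    intro x y
    simp only [DopX, dPoly_add]; ring
  set φ := Polynomial.mapRingHom (algebraMap (Polynomial ℂ) R) with hφ
  have hdφ : ∀ a, dPoly d (φ a) = φ (dX a) := by
    intro a
    ext n
    simp [hφ, dPoly_coeff, dX_coeff, hd]
  have hT : ∀ a x, DopX f d finv (φ a * x) = φ (dX a) * x + φ a * DopX f d finv x := by
    intro a x
    simp only [DopX, dPoly_mul, hdφ]; ring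
  have hf0 : f ≠ 0 := hsf.ne_zero
  have hcop : IsCoprime f (derivative f) := 
    (PerfectField.separable_iff_squarefree (g := f)).mpr hsf
  have hinj : Function.Injective φ := by
    apply Polynomial.map_injective
    exact IsLocalization.injective R (powers_le_nonZeroDivisors_of_noZeroDivisors hf0)
  have hfC : φ (C f) * C finv = 1 := by
    simp only [hφ, coe_mapRingHom, map_C]
    rw [← C_mul, hfinv, C_1]
  have hD1 : DopX f d finv 1 = X * C finv * φ (C (derivative f)) := by
    have h0 : dPoly d (1 : Polynomial R) = 0 := by
      have := hdφ 1
      rw [map_one] at this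
      rw [this, ← C_1, dX_C]; simp
    simp only [DopX, h0, hφ, coe_mapRingHom, map_C, C_mul]; ring
  have hφX : φ X = X := by simp [hφ]
  have hDf : ∀ x, φ (C f) * DopX f d finv x = φ (C f) * dPoly d x + X * φ (C (derivative f)) * x := by
    intro x
    have : (C (finv * algebraMap (Polynomial ℂ) R (derivative f)) : Polynomial R)
        = C finv * φ (C (derivative f)) := by simp [hφ]
    rw [DopX, this]
    linear_combination (X * φ (C (derivative f)) * x) * hfC
  have hGact : actD1s f d finv G 1 = 0 := by
    have hG' : G = monomial 1 (C f) - monomial 0 (X * C (derivative f)) := by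
      rw [hG, ← C_mul_X_eq_monomial, monomial_zero_left]
    rw [actD1s_eq, hG', ev_sub, ev_monomial, ev_monomial, ← hφ]
    simp only [Function.iterate_one, Function.iterate_zero, id]
    rw [hD1, map_mul, hφX]
    linear_combination (X * φ (C (derivative f))) * hfC
  have hGc1 : G.coeff 1 = C f := by rw [hG]; simp [coeff_C]
  have hGc2 : ∀ j, 1 < j → G.coeff j = 0 := by
    intro j hj
    obtain ⟨i, rfl⟩ : ∃ i, j = i + 2 := ⟨j - 2, by omega⟩
    rw [hG, coeff_sub, coeff_C_succ, coeff_C_mul, coeff_X]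
    simp
  have hLc2 : ∀ m j, m + 1 < j → (leftD^[m] G).coeff j = 0 := by
    intro m
    induction m with
    | zero => intro j hj; exact hGc2 j (by omega)
    | succ m ih =>
      intro j hj
      obtain ⟨i, rfl⟩ : ∃ i, j = i + 1 := ⟨j - 1, by omega⟩
      rw [Function.iterate_succ_apply', leftD_coeff, ih i (by omega), ih (i+1) (by omega), dX_zero,
        add_zero]
  have hLc1 : ∀ m, (leftD^[m] G).coeff (m + 1) = C f := by
    intro m
    induction m with
    | zero => exact hGc1
    | succ m ih =>
      rw [Function.iterate_succ_apply', leftD_coeff, ih, hLc2 m _ (by omega), dX_zero, add_zero]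
  have hnum : ∀ k, φ (C f) ^ k * (DopX f d finv)^[k] 1 = φ (numer f k) := by
    intro k
    induction k with
    | zero => simp [numer]
    | succ k ih =>
      have h1 := congrArg (DopX f d finv) ih
      rw [← map_pow, hT] at h1
      have h2 := hDf (φ (numer f k))
      rw [hdφ] at h2
      have h3 : C f * dX (C f ^ k) = k * C f ^ k * C (derivative f) := by
        rw [← C_pow, dX_C, derivative_pow, ← C_mul]
        rcases k with _ | k
        · simp
        · simp only [C_mul, C_pow, map_natCast, Nat.add_sub_cancel]; ring
      have h4 := congrArg φ h3
      simp only [map_mul, map_pow, map_natCast] at h4 h1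
      rw [Function.iterate_succ_apply', numer, map_add, map_mul, map_mul, map_mul, map_sub, hφX,
        map_natCast]
      linear_combination φ (C f) * h1 + h2 - (DopX f d finv)^[k] 1 * h4
        - k * φ (C (derivative f)) * ih
  have hann_nmul : ∀ Q, actD1s f d finv (nmul Q G) 1 = 0 := by
    intro Q
    rw [actD1s_eq, ← hφ, ev_nmul φ _ _ hadd hT, hφ, ← actD1s_eq f d finv G, hGact]
    have hD0 : ∀ k, (DopX f d finv)^[k] 0 = 0 := by
      intro k
      apply Function.iterate_fixed
      have := hadd 0 0
      simpa using this
    simp [ev, hD0, Polynomial.sum_def]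
  intro P
  constructor
  · suffices H : ∀ n, ∀ P, (∀ j, n ≤ j → P.coeff j = 0) → actD1s f d finv P 1 = 0 →
        ∃ Q, P = nmul Q G by
      intro hP
      obtain ⟨Q, hQ⟩ := H (P.natDegree + 1) P
        (fun j hj => coeff_eq_zero_of_natDegree_lt (by omega)) hP
      exact ⟨Q, fun q => by rw [hQ, rep_nmul]⟩
    intro n
    induction n with
    | zero =>
      intro P hP _
      refine ⟨0, ?_⟩
      ext1 j
      rw [hP j (by omega)]
      simp [nmul]
    | succ n ih =>
      intro P hP hact
      have hsum : ∑ k ∈ Finset.range (n + 1), φ (P.coeff k) * (DopX f d finv)^[k] 1 = 0 := by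
        rw [← hact, actD1s_eq, ev]
        symm
        apply Polynomial.sum_over_range' _ (by simp)
        rw [Nat.lt_succ_iff, natDegree_le_iff_coeff_eq_zero]
        exact fun j hj => hP j hj
      have hsum2 : ∑ k ∈ Finset.range (n + 1), P.coeff k * C f ^ (n - k) * numer f k = 0 := by
        apply hinj
        rw [map_zero, map_sum, ← mul_zero (φ (C f) ^ n), ← hsum, Finset.mul_sum]
        refine Finset.sum_congr rfl fun k hk => ?_
        have hk' : k ≤ n := by rw [Finset.mem_range] at hk; omega
        rw [map_mul, map_mul, map_pow, ← hnum]
        obtain ⟨e, rfl⟩ := Nat.exists_eq_add_of_le hk'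
        rw [Nat.add_sub_cancel_left, pow_add]; ring
      rw [Finset.sum_range_succ, Nat.sub_self, pow_zero, mul_one] at hsum2
      rcases n with _ | m
      · have h0 : P.coeff 0 = 0 := by simpa [numer] using hsum2
        refine ih P (fun j _ => ?_) hact
        rcases j with _ | j
        · exact h0
        · exact hP _ (by omega)
      · have hdvd : C f ∣ P.coeff (m + 1) * numer f (m + 1) := by
          rw [← dvd_add_right (a := C f) (b := ∑ k ∈ Finset.range (m + 1),
            P.coeff k * C f ^ (m + 1 - k) * numer f k), hsum2]
          · exact dvd_zero _
          · refine Finset.dvd_sum fun k hk => ?_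
            rw [Finset.mem_range] at hk
            exact Dvd.dvd.mul_right (Dvd.dvd.mul_left (dvd_pow_self _ (by omega)) _) _
        obtain ⟨b, hb⟩ := dvd_of_dvd_mul_numer f hcop _ _ hdvd
        obtain ⟨Q, hQ⟩ := ih (P - nmul (monomial m b) G) (by
          intro j hj
          rw [nmul_monomial, coeff_sub, coeff_C_mul]
          rcases Nat.eq_or_lt_of_le hj with rfl | hj
          · rw [hLc1, hb]; ring
          · rw [hP j (by omega), hLc2 m j hj]; ring) (by
          have := hann_nmul (monomial m b)
          rw [actD1s_eq] at this hact ⊢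
          rw [ev_sub, this, hact, sub_zero])
        refine ⟨Q + monomial m b, ?_⟩
        rw [nmul_add, ← hQ]; ring
  · rintro ⟨Q, hQ⟩
    have : P = nmul Q G := by
      rw [← sub_eq_zero]
      apply rep_faithful
      intro q
      have h1 := hQ q
      rw [← rep_nmul] at h1
      rw [rep_eq] at h1 ⊢
      rw [ev_sub, h1, rep_eq, sub_self]
    rw [this]
    exact hann_nmul Q

end
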